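/- Let s > 3/2. There exists a constant C (depending on φ and s but not on n) such that for every sufficiently large integer n, the function f_n(x) = 2^{-ns} φ(x) sin((17/12)·2^n x) satisfies ‖f_n ∂_x f_n‖_{H^s(ℝ)} ≤ C·2^{-n(s-1)}. -/

import Mathlib

open MeasureTheory Filter

/-- Fourier transform with convention `f̂(ξ) = ∫ f(x) e^{-i x ξ} dx`. -/
noncomputable def fourierT (f : ℝ → ℂ) (ξ : ℝ) : ℂ :=
  ∫ x : ℝ, f x * Complex.exp (-(Complex.I * x * ξ))

/-- The `H^s(ℝ)` norm, `‖f‖_{H^s}² = ∫ (1+|ξ|²)^s |f̂(ξ)|² dξ`. -/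
noncomputable def sobolevNorm (s : ℝ) (f : ℝ → ℂ) : ℝ :=
  Real.sqrt (∫ ξ : ℝ, (1 + ξ ^ 2) ^ s * ‖fourierT f ξ‖ ^ 2)

/-- Membership in `H^s(ℝ)` (for integrable representatives). -/
def MemSobolev (s : ℝ) (f : ℝ → ℂ) : Prop :=
  MeasureTheory.Integrable f ∧
    MeasureTheory.Integrable (fun ξ : ℝ => (1 + ξ ^ 2) ^ s * ‖fourierT f ξ‖ ^ 2)

/-- The high-frequency functions `f_n(x) = 2^{-ns} φ(x) sin((17/12)·2^n x)`. -/
noncomputable def fn (s : ℝ) (φ : ℝ → ℂ) (n : ℕ) : ℝ → ℂ :=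
  fun x => (((2 : ℝ) ^ (-(n : ℝ) * s) * Real.sin (17 / 12 * 2 ^ n * x) : ℝ) : ℂ) * φ x

/-- The low-frequency functions `g_n(x) = 2^{-n} φ(x)`. -/
noncomputable def gn (φ : ℝ → ℂ) (n : ℕ) : ℝ → ℂ :=
  fun x => (((2 : ℝ) ^ (-(n : ℝ)) : ℝ) : ℂ) * φ x

/-- `φ̂` is an even, real-valued, nonnegative function in `C_c^∞(ℝ)` with `φ̂ = 1` on
`{|ξ| ≤ 1/4}` and `φ̂ = 0` on `{|ξ| ≥ 1/2}`, and `φ` is the (continuous, integrable)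
function on `ℝ` whose Fourier transform is `φ̂`. -/
structure CutoffPair (φhat : ℝ → ℝ) (φ : ℝ → ℂ) : Prop where
  smooth : ContDiff ℝ (⊤ : ℕ∞) φhat
  compactSupport : HasCompactSupport φhat
  even : ∀ ξ : ℝ, φhat (-ξ) = φhat ξ
  nonneg : ∀ ξ : ℝ, 0 ≤ φhat ξ
  eq_one : ∀ ξ : ℝ, |ξ| ≤ 1 / 4 → φhat ξ = 1
  eq_zero : ∀ ξ : ℝ, 1 / 2 ≤ |ξ| → φhat ξ = 0
  continuous : Continuous φ
  integrable : MeasureTheory.Integrable φ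
  fourier_eq : ∀ ξ : ℝ, fourierT φ ξ = (φhat ξ : ℂ)

/-!
Since `f ∂ₓf = ½ ∂ₓ(f²)`, the `H^s` norm of `f_n ∂ₓf_n` is at most half the `H^{s+1}` norm of
`f_n² = 2^{-2ns} sin²(λx) φ²`, where `λ = (17/12)·2ⁿ`. Writing
`sin²(λx) = 1/2 - (e^{2iλx} + e^{-2iλx})/4`, the factor `sin²(λx)` only translates the Fourier
transform of `φ²` by `0` and `±2λ`, and by Peetre's inequality a translation by `a` costs at most
a factor `(2(1 + a²))^{(s+1)/2}` in `H^{s+1}`. With `a = 2λ` this is `O(2^{n(s+1)})`, and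
`2^{-2ns} · 2^{n(s+1)} = 2^{-n(s-1)}`. As `φ̂` is smooth and compactly supported, `φ` is a Schwartz
function, so the `H^{s+1}` norm of `φ²` is finite.
-/

open scoped FourierTransform SchwartzMap

section FourierT

lemma fourierT_eq_fourier (f : ℝ → ℂ) (ξ : ℝ) : fourierT f ξ = 𝓕 f (ξ / (2 * Real.pi)) := by
  rw [Real.fourier_real_eq_integral_exp_smul]
  unfold fourierT
  congr 1 with x
  have hπ : (Real.pi : ℂ) ≠ 0 := Complex.ofReal_ne_zero.2 Real.pi_ne_zero
  rw [smul_eq_mul, mul_comm]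
  congr 2
  push_cast
  field_simp

lemma fourierT_add {f g : ℝ → ℂ} (hf : Integrable f) (hg : Integrable g) :
    fourierT (f + g) = fourierT f + fourierT g := by
  have integrable_mul_exp {h : ℝ → ℂ} (hh : Integrable h) (ξ : ℝ) :
      Integrable fun x : ℝ => h x * Complex.exp (-(Complex.I * x * ξ)) :=
    hh.mul_bdd (c := 1) (by fun_prop) (.of_forall fun x => by simp [Complex.norm_exp])
  ext ξ
  simp only [fourierT, Pi.add_apply, add_mul]
  exact integral_add (integrable_mul_exp hf ξ) (integrable_mul_exp hg ξ)

lemma fourierT_const_smul (c : ℂ) (f : ℝ → ℂ) : fourierT (c • f) = c • fourierT f := by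
  ext ξ
  simp only [fourierT, Pi.smul_apply, smul_eq_mul, mul_assoc, integral_const_mul]

lemma continuous_fourierT {f : ℝ → ℂ} (hf : Integrable f) : Continuous (fourierT f) := by
  have h𝓕 : Continuous (𝓕 f) :=
    VectorFourier.fourierIntegral_continuous Real.continuous_fourierChar continuous_inner hf
  rw [funext (fourierT_eq_fourier f)]
  exact h𝓕.comp (continuous_id.div_const _)

lemma fourierT_deriv {f : ℝ → ℂ} (hf : Integrable f) (hdiff : Differentiable ℝ f)
    (hf' : Integrable (deriv f)) (ξ : ℝ) :
    fourierT (deriv f) ξ = Complex.I * ξ * fourierT f ξ := by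
  have hπ : (Real.pi : ℂ) ≠ 0 := Complex.ofReal_ne_zero.2 Real.pi_ne_zero
  simp only [fourierT_eq_fourier, Real.fourier_deriv hf hdiff hf', smul_eq_mul]
  push_cast
  field_simp

/-- The modulation `e^{iax} f(x)` of `f`, which translates its Fourier transform by `a`. -/
noncomputable def modulation (a : ℝ) (f : ℝ → ℂ) : ℝ → ℂ :=
  fun x => Complex.exp (Complex.I * a * x) * f x

lemma integrable_modulation {f : ℝ → ℂ} (hf : Integrable f) (a : ℝ) :
    Integrable (modulation a f) :=
  hf.bdd_mul (c := 1) (by fun_prop) (.of_forall fun x => by simp [Complex.norm_exp])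

lemma fourierT_modulation (a : ℝ) (f : ℝ → ℂ) (ξ : ℝ) :
    fourierT (modulation a f) ξ = fourierT f (ξ - a) := by
  unfold fourierT modulation
  congr 1 with x
  rw [mul_comm (Complex.exp _), mul_assoc, ← Complex.exp_add]
  congr 2
  push_cast
  ring

end FourierT

section SobolevNorm

variable {s : ℝ} {f g : ℝ → ℂ}

/-- The weighted Fourier transform `(1 + ξ²)^{s/2} f̂(ξ)`: the `H^s` norm of `f` is its `L²` norm,
which gives access to the triangle inequality in `L²`. -/
noncomputable def weightedFourierT (s : ℝ) (f : ℝ → ℂ) (ξ : ℝ) : ℂ :=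
  (1 + ξ ^ 2) ^ (s / 2) • fourierT f ξ

lemma norm_weightedFourierT_sq (s : ℝ) (f : ℝ → ℂ) (ξ : ℝ) :
    ‖weightedFourierT s f ξ‖ ^ 2 = (1 + ξ ^ 2) ^ s * ‖fourierT f ξ‖ ^ 2 := by
  have hweight : ((1 + ξ ^ 2) ^ (s / 2)) ^ 2 = (1 + ξ ^ 2) ^ s := by
    rw [← Real.rpow_mul_natCast (by positivity)]
    simp
  rw [weightedFourierT, norm_smul, mul_pow, Real.norm_eq_abs, sq_abs, hweight]

lemma weightedFourierT_add (hf : Integrable f) (hg : Integrable g) :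
    weightedFourierT s (f + g) = weightedFourierT s f + weightedFourierT s g := by
  ext ξ
  simp only [weightedFourierT, fourierT_add hf hg, Pi.add_apply, smul_add]

lemma continuous_weightedFourierT (hf : Integrable f) : Continuous (weightedFourierT s f) := by
  have hweight : Continuous fun ξ : ℝ => (1 + ξ ^ 2) ^ (s / 2) :=
    (by fun_prop : Continuous fun ξ : ℝ => 1 + ξ ^ 2).rpow_const fun ξ => .inl (by positivity)
  exact hweight.smul (continuous_fourierT hf)

lemma memSobolev_iff_memLp_weightedFourierT :
    MemSobolev s f ↔ Integrable f ∧ MemLp (weightedFourierT s f) 2 := by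
  refine and_congr_right fun hf => ?_
  rw [memLp_two_iff_integrable_sq_norm (continuous_weightedFourierT hf).aestronglyMeasurable]
  simp only [norm_weightedFourierT_sq]

lemma sobolevNorm_eq_lpNorm (hf : Integrable f) :
    sobolevNorm s f = lpNorm (weightedFourierT s f) 2 volume := by
  rw [lpNorm_eq_integral_norm_rpow_toReal (by simp) (by simp)
    (continuous_weightedFourierT hf).aestronglyMeasurable, sobolevNorm, Real.sqrt_eq_rpow]
  simp [norm_weightedFourierT_sq]

lemma sobolevNorm_nonneg (s : ℝ) (f : ℝ → ℂ) : 0 ≤ sobolevNorm s f :=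
  Real.sqrt_nonneg _

lemma MemSobolev.add (hf : MemSobolev s f) (hg : MemSobolev s g) : MemSobolev s (f + g) := by
  rw [memSobolev_iff_memLp_weightedFourierT] at hf hg ⊢
  rw [weightedFourierT_add hf.1 hg.1]
  exact ⟨hf.1.add hg.1, hf.2.add hg.2⟩

lemma sobolevNorm_add_le (hf : MemSobolev s f) (hg : MemSobolev s g) :
    sobolevNorm s (f + g) ≤ sobolevNorm s f + sobolevNorm s g := by
  rw [sobolevNorm_eq_lpNorm hf.1, sobolevNorm_eq_lpNorm hg.1,
    sobolevNorm_eq_lpNorm (hf.1.add hg.1), weightedFourierT_add hf.1 hg.1]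
  exact lpNorm_add_le (memSobolev_iff_memLp_weightedFourierT.1 hf).2 one_le_two

lemma MemSobolev.const_smul (hf : MemSobolev s f) (c : ℂ) : MemSobolev s (c • f) := by
  refine ⟨hf.1.smul c, (hf.2.const_mul (‖c‖ ^ 2)).congr (.of_forall fun ξ => ?_)⟩
  simp only [fourierT_const_smul, Pi.smul_apply, norm_smul]
  ring

lemma sobolevNorm_const_smul (c : ℂ) (s : ℝ) (f : ℝ → ℂ) :
    sobolevNorm s (c • f) = ‖c‖ * sobolevNorm s f := by
  simp only [sobolevNorm, fourierT_const_smul, Pi.smul_apply, norm_smul, mul_pow,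
    mul_left_comm _ (‖c‖ ^ 2), integral_const_mul]
  rw [Real.sqrt_mul (by positivity), Real.sqrt_sq (norm_nonneg c)]

lemma sobolevNorm_deriv_le (hf : MemSobolev (s + 1) f) (hdiff : Differentiable ℝ f)
    (hf' : Integrable (deriv f)) : sobolevNorm s (deriv f) ≤ sobolevNorm (s + 1) f := by
  refine Real.sqrt_le_sqrt (integral_mono_of_nonneg (.of_forall fun ξ => by positivity) hf.2
    (.of_forall fun ξ => ?_))
  have hpos : 0 < 1 + ξ ^ 2 := by positivity
  calc (1 + ξ ^ 2) ^ s * ‖fourierT (deriv f) ξ‖ ^ 2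
      = (1 + ξ ^ 2) ^ s * ξ ^ 2 * ‖fourierT f ξ‖ ^ 2 := by
        simp [fourierT_deriv hf.1 hdiff hf', mul_pow, mul_assoc]
    _ ≤ (1 + ξ ^ 2) ^ s * (1 + ξ ^ 2) * ‖fourierT f ξ‖ ^ 2 := by gcongr; linarith
    _ = (1 + ξ ^ 2) ^ (s + 1) * ‖fourierT f ξ‖ ^ 2 := by rw [Real.rpow_add_one hpos.ne']

lemma sobolevNorm_mul_deriv_le (hdiff : Differentiable ℝ f) (hsq : MemSobolev (s + 1) (f ^ 2))
    (hsq' : Integrable (deriv (f ^ 2))) :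
    sobolevNorm s (fun x => f x * deriv f x) ≤ 1 / 2 * sobolevNorm (s + 1) (f ^ 2) := by
  have hmul : (fun x => f x * deriv f x) = (1 / 2 : ℂ) • deriv (f ^ 2) := by
    ext x
    rw [Pi.smul_apply, ((hdiff x).hasDerivAt.pow 2).deriv, smul_eq_mul]
    ring
  calc sobolevNorm s (fun x => f x * deriv f x)
      = 1 / 2 * sobolevNorm s (deriv (f ^ 2)) := by
        rw [hmul, sobolevNorm_const_smul]
        norm_num
    _ ≤ 1 / 2 * sobolevNorm (s + 1) (f ^ 2) := by
        gcongr
        exact sobolevNorm_deriv_le hsq (hdiff.pow 2) hsq'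

lemma one_add_sq_le_two_mul_one_add_sq_mul (a ξ : ℝ) :
    1 + ξ ^ 2 ≤ 2 * (1 + a ^ 2) * (1 + (ξ - a) ^ 2) := by
  nlinarith [sq_nonneg (ξ - 2 * a), sq_nonneg (a * (ξ - a))]

lemma peetre_inequality (s a ξ : ℝ) :
    (1 + ξ ^ 2) ^ s ≤ (2 * (1 + a ^ 2)) ^ |s| * (1 + (ξ - a) ^ 2) ^ s := by
  rcases le_total 0 s with hs | hs
  · rw [abs_of_nonneg hs, ← Real.mul_rpow (by positivity) (by positivity)]
    exact Real.rpow_le_rpow (by positivity) (one_add_sq_le_two_mul_one_add_sq_mul a ξ) hs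
  · have hswap : 1 + (ξ - a) ^ 2 ≤ 2 * (1 + a ^ 2) * (1 + ξ ^ 2) := by
      simpa using one_add_sq_le_two_mul_one_add_sq_mul (-a) (ξ - a)
    have hneg := Real.rpow_le_rpow_of_nonpos (by positivity) hswap hs
    rw [Real.mul_rpow (by positivity) (by positivity)] at hneg
    rwa [abs_of_nonpos hs, Real.rpow_neg (by positivity), inv_mul_eq_div,
      le_div_iff₀' (by positivity)]

lemma weight_mul_norm_fourierT_modulation_sq_le (s a : ℝ) (f : ℝ → ℂ) (ξ : ℝ) :
    (1 + ξ ^ 2) ^ s * ‖fourierT (modulation a f) ξ‖ ^ 2 ≤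
      (2 * (1 + a ^ 2)) ^ |s| * ((1 + (ξ - a) ^ 2) ^ s * ‖fourierT f (ξ - a)‖ ^ 2) := by
  rw [fourierT_modulation, ← mul_assoc]
  gcongr
  exact peetre_inequality s a ξ

lemma MemSobolev.modulation (hf : MemSobolev s f) (a : ℝ) : MemSobolev s (modulation a f) := by
  have hint := integrable_modulation hf.1 a
  refine ⟨hint, ((hf.2.comp_sub_right a).const_mul ((2 * (1 + a ^ 2)) ^ |s|)).mono' ?_
    (.of_forall fun ξ => ?_)⟩
  · simp only [← norm_weightedFourierT_sq]
    exact ((continuous_weightedFourierT hint).norm.pow 2).aestronglyMeasurable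
  · rw [Real.norm_of_nonneg (by positivity)]
    exact weight_mul_norm_fourierT_modulation_sq_le s a f ξ

lemma sobolevNorm_modulation_le (hf : MemSobolev s f) (a : ℝ) :
    sobolevNorm s (modulation a f) ≤ (2 * (1 + a ^ 2)) ^ (|s| / 2) * sobolevNorm s f := by
  have hintegral := integral_mono (hf.modulation a).2
    ((hf.2.comp_sub_right a).const_mul ((2 * (1 + a ^ 2)) ^ |s|))
    (weight_mul_norm_fourierT_modulation_sq_le s a f)
  rw [integral_const_mul,
    integral_sub_right_eq_self (fun ξ => (1 + ξ ^ 2) ^ s * ‖fourierT f ξ‖ ^ 2) a] at hintegral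
  refine (Real.sqrt_le_sqrt hintegral).trans_eq ?_
  rw [Real.sqrt_mul (by positivity), Real.sqrt_eq_rpow, ← Real.rpow_mul (by positivity),
    mul_one_div, sobolevNorm]

end SobolevNorm

section Oscillation

variable {s : ℝ} {f : ℝ → ℂ}

lemma sin_sq_mul_eq_modulation (l : ℝ) (f : ℝ → ℂ) :
    (fun x => (Real.sin (l * x) : ℂ) ^ 2 * f x) =
      (1 / 2 : ℂ) • f + (-1 / 4 : ℂ) • (modulation (2 * l) f + modulation (-(2 * l)) f) := by
  ext x
  have hcos : Complex.exp (Complex.I * (2 * l : ℝ) * x)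
      + Complex.exp (Complex.I * (-(2 * l) : ℝ) * x) = 2 * Complex.cos (2 * (l * x)) := by
    rw [Complex.two_cos]
    congr 2 <;> push_cast <;> ring
  simp only [modulation, Pi.add_apply, Pi.smul_apply, smul_eq_mul, ← add_mul, hcos,
    Complex.cos_two_mul_eq_one_sub]
  push_cast
  ring

lemma MemSobolev.sin_sq_mul (hf : MemSobolev s f) (l : ℝ) :
    MemSobolev s fun x => (Real.sin (l * x) : ℂ) ^ 2 * f x := by
  rw [sin_sq_mul_eq_modulation]
  exact (hf.const_smul _).add (((hf.modulation _).add (hf.modulation _)).const_smul _)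

lemma sobolevNorm_sin_sq_mul_le (hf : MemSobolev s f) (l : ℝ) :
    sobolevNorm s (fun x => (Real.sin (l * x) : ℂ) ^ 2 * f x) ≤
      (2 * (1 + (2 * l) ^ 2)) ^ (|s| / 2) * sobolevNorm s f := by
  have hplus := sobolevNorm_modulation_le hf (2 * l)
  have hminus := sobolevNorm_modulation_le hf (-(2 * l))
  have hsum := sobolevNorm_add_le (hf.modulation (2 * l)) (hf.modulation (-(2 * l)))
  rw [neg_sq] at hminus
  set A := (2 * (1 + (2 * l) ^ 2)) ^ (|s| / 2)
  have hA : 1 ≤ A := Real.one_le_rpow (by nlinarith [sq_nonneg l]) (by positivity)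
  have hle : sobolevNorm s f ≤ A * sobolevNorm s f :=
    le_mul_of_one_le_left (sobolevNorm_nonneg s f) hA
  rw [sin_sq_mul_eq_modulation]
  refine (sobolevNorm_add_le (hf.const_smul _)
    (((hf.modulation _).add (hf.modulation _)).const_smul _)).trans ?_
  rw [sobolevNorm_const_smul, sobolevNorm_const_smul, show ‖(1 / 2 : ℂ)‖ = 1 / 2 by norm_num,
    show ‖(-1 / 4 : ℂ)‖ = 1 / 4 by norm_num]
  linarith

lemma integrable_deriv_sin_sq_mul (hf : Integrable f) (hdiff : Differentiable ℝ f)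
    (hf' : Integrable (deriv f)) (l : ℝ) :
    Integrable (deriv fun x => (Real.sin (l * x) : ℂ) ^ 2 * f x) := by
  have hderiv (x : ℝ) : HasDerivAt (fun x => (Real.sin (l * x) : ℂ) ^ 2 * f x)
      (((l * Real.sin (2 * (l * x)) : ℝ) : ℂ) * f x
        + (Real.sin (l * x) : ℂ) ^ 2 * deriv f x) x := by
    have hsin : HasDerivAt (fun x => Real.sin (l * x)) (Real.cos (l * x) * l) x := by
      simpa using ((hasDerivAt_id x).const_mul l).sin
    refine ((hsin.ofReal_comp.fun_pow 2).mul (hdiff x).hasDerivAt).congr_deriv ?_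
    rw [Real.sin_two_mul]
    push_cast
    ring
  rw [funext fun x => (hderiv x).deriv]
  refine (hf.bdd_mul (c := |l|) (by fun_prop) (.of_forall fun x => ?_)).add
    (hf'.bdd_mul (c := 1) (by fun_prop) (.of_forall fun x => ?_))
  · rw [Complex.norm_real, norm_mul]
    exact mul_le_of_le_one_right (abs_nonneg l) (Real.abs_sin_le_one _)
  · rw [norm_pow, Complex.norm_real]
    exact pow_le_one₀ (norm_nonneg _) (Real.abs_sin_le_one _)

end Oscillation

section Schwartz

lemma exists_schwartzMap_eq_fourierT (f : 𝓢(ℝ, ℂ)) : ∃ g : 𝓢(ℝ, ℂ), ⇑g = fourierT f := by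
  have hπ : (2 * Real.pi)⁻¹ ≠ 0 := by positivity
  refine ⟨SchwartzMap.compCLMOfContinuousLinearEquiv ℂ
    (ContinuousLinearEquiv.unitsEquivAut ℝ (Units.mk0 _ hπ)) (𝓕 f), funext fun ξ => ?_⟩
  simp [fourierT_eq_fourier, SchwartzMap.fourier_coe, div_eq_mul_inv]

lemma memSobolev_schwartzMap (s : ℝ) (f : 𝓢(ℝ, ℂ)) : MemSobolev s f := by
  obtain ⟨g, hg⟩ := exists_schwartzMap_eq_fourierT f
  have hgrowth : Function.HasTemperateGrowth fun ξ : ℝ => (1 + ξ ^ 2) ^ (s / 2) := by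
    simpa using Function.hasTemperateGrowth_one_add_norm_sq_rpow ℝ (s / 2)
  refine memSobolev_iff_memLp_weightedFourierT.2 ⟨f.integrable, ?_⟩
  have hmem := (SchwartzMap.smulLeftCLM ℂ (fun ξ : ℝ => (1 + ξ ^ 2) ^ (s / 2)) g).memLp 2
  rwa [SchwartzMap.smulLeftCLM_apply hgrowth, hg] at hmem

lemma CutoffPair.exists_schwartzMap_eq {φhat : ℝ → ℝ} {φ : ℝ → ℂ} (hφ : CutoffPair φhat φ) :
    ∃ g : 𝓢(ℝ, ℂ), φ = g := by
  have h2π : 2 * Real.pi ≠ 0 := by positivity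
  have h𝓕 : 𝓕 φ = fun w => (φhat (2 * Real.pi * w) : ℂ) := by
    ext w
    rw [← hφ.fourier_eq, fourierT_eq_fourier, mul_div_cancel_left₀ _ h2π]
  have hsupport : HasCompactSupport (𝓕 φ) := by
    rw [h𝓕]
    exact (hφ.compactSupport.comp_homeomorph (Homeomorph.mulLeft₀ _ h2π)).comp_left
      Complex.ofReal_zero
  have hsmooth : ContDiff ℝ (⊤ : ℕ∞) (𝓕 φ) := by
    rw [h𝓕]
    exact Complex.ofRealCLM.contDiff.comp (hφ.smooth.comp (contDiff_const.mul contDiff_id))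
  refine ⟨𝓕⁻ (hsupport.toSchwartzMap hsmooth), ?_⟩
  rw [SchwartzMap.fourierInv_coe]
  exact (hφ.continuous.fourierInv_fourier_eq hφ.integrable
    (hsupport.toSchwartzMap hsmooth).integrable).symm

end Schwartz

lemma sobolevNorm_mul_deriv_sin_mul_le (s c l : ℝ) (φ : 𝓢(ℝ, ℂ)) {u : ℝ → ℂ}
    (hu : u = fun x => ((c * Real.sin (l * x) : ℝ) : ℂ) * φ x) :
    sobolevNorm s (fun x => u x * deriv u x) ≤
      c ^ 2 / 2 * ((2 * (1 + (2 * l) ^ 2)) ^ (|s + 1| / 2) * sobolevNorm (s + 1) (⇑φ ^ 2)) := by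
  obtain ⟨ψ, hψ⟩ : ∃ ψ : 𝓢(ℝ, ℂ), ⇑ψ = ⇑φ ^ 2 :=
    ⟨SchwartzMap.pairing (ContinuousLinearMap.mul ℂ ℂ) φ φ, by ext x; simp [sq]⟩
  set v : ℝ → ℂ := fun x => (Real.sin (l * x) : ℂ) ^ 2 * ψ x with hv
  have hsq : u ^ 2 = ((c ^ 2 : ℝ) : ℂ) • v := by
    ext x
    simp only [hu, hv, hψ, Pi.pow_apply, Pi.smul_apply, smul_eq_mul]
    push_cast
    ring
  have hu_diff : Differentiable ℝ u := by
    have hφ := φ.differentiable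
    rw [hu]
    fun_prop
  have hψ_mem := memSobolev_schwartzMap (s + 1) ψ
  have hsq_mem : MemSobolev (s + 1) (u ^ 2) := hsq ▸ (hψ_mem.sin_sq_mul l).const_smul _
  have hsq_deriv : Integrable (deriv (u ^ 2)) := by
    have hv' : Integrable (deriv v) := integrable_deriv_sin_sq_mul ψ.integrable ψ.differentiable
      (SchwartzMap.derivCLM ℂ ℂ ψ).integrable l
    rw [hsq]
    exact (hv'.smul _).congr (.of_forall fun x => (deriv_const_smul_field _ v).symm)
  calc sobolevNorm s (fun x => u x * deriv u x)
      ≤ 1 / 2 * sobolevNorm (s + 1) (u ^ 2) := sobolevNorm_mul_deriv_le hu_diff hsq_mem hsq_deriv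
    _ = c ^ 2 / 2 * sobolevNorm (s + 1) v := by
        rw [hsq, sobolevNorm_const_smul, Complex.norm_real, Real.norm_of_nonneg (sq_nonneg c)]
        ring
    _ ≤ _ := by
        gcongr
        exact hψ ▸ sobolevNorm_sin_sq_mul_le hψ_mem l

lemma two_mul_one_add_mul_sq_rpow_le {r L : ℝ} (hr : 0 ≤ r) (hL : 1 ≤ L) (k : ℝ) :
    (2 * (1 + (k * L) ^ 2)) ^ (r / 2) ≤ (2 * (1 + k ^ 2)) ^ (r / 2) * L ^ r := by
  have hbase : 2 * (1 + (k * L) ^ 2) ≤ 2 * (1 + k ^ 2) * L ^ 2 := by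
    linarith [one_le_pow₀ hL (n := 2), mul_pow k L 2]
  calc (2 * (1 + (k * L) ^ 2)) ^ (r / 2)
      ≤ (2 * (1 + k ^ 2) * L ^ 2) ^ (r / 2) :=
        Real.rpow_le_rpow (by positivity) hbase (by positivity)
    _ = (2 * (1 + k ^ 2)) ^ (r / 2) * L ^ r := by
        rw [Real.mul_rpow (by positivity) (by positivity), ← Real.rpow_natCast_mul (by positivity)]
        congr 2
        push_cast
        ring

theorem fn_deriv_fn_bound_general (s : ℝ) (hs : -1 ≤ s) (φ : 𝓢(ℝ, ℂ)) :
    ∃ C : ℝ, 0 < C ∧ ∀ n : ℕ,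
      sobolevNorm s (fun x => fn s φ n x * deriv (fn s φ n) x)
        ≤ C * (2 : ℝ) ^ (-(n : ℝ) * (s - 1)) := by
  set K : ℝ := (2 * (1 + (2 * (17 / 12)) ^ 2)) ^ ((s + 1) / 2)
  set M := sobolevNorm (s + 1) (⇑φ ^ 2)
  have hM : 0 ≤ M := sobolevNorm_nonneg _ _
  refine ⟨K * M / 2 + 1, by positivity, fun n => ?_⟩
  have hexponents : ((2 : ℝ) ^ (-(n : ℝ) * s)) ^ 2 * ((2 : ℝ) ^ n) ^ (s + 1)
      = (2 : ℝ) ^ (-(n : ℝ) * (s - 1)) := by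
    rw [← Real.rpow_mul_natCast two_pos.le, ← Real.rpow_natCast_mul two_pos.le,
      ← Real.rpow_add two_pos]
    congr 1
    push_cast
    ring
  calc _ ≤ ((2 : ℝ) ^ (-(n : ℝ) * s)) ^ 2 / 2
          * ((2 * (1 + (2 * (17 / 12 * 2 ^ n)) ^ 2)) ^ (|s + 1| / 2) * M) :=
        sobolevNorm_mul_deriv_sin_mul_le s _ (17 / 12 * 2 ^ n) φ rfl
    _ ≤ ((2 : ℝ) ^ (-(n : ℝ) * s)) ^ 2 / 2 * (K * ((2 : ℝ) ^ n) ^ (s + 1) * M) := by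
        have hs1 : 0 ≤ s + 1 := by linarith
        rw [abs_of_nonneg hs1, ← mul_assoc 2 (17 / 12 : ℝ)]
        gcongr
        exact two_mul_one_add_mul_sq_rpow_le hs1 (one_le_pow₀ one_le_two) _
    _ = K * M / 2 * (2 : ℝ) ^ (-(n : ℝ) * (s - 1)) := by
        rw [← hexponents]
        ring
    _ ≤ _ := by
        gcongr
        linarith

/-- For `s > 3/2` there is `C` (independent of `n`) such that
`‖f_n ∂_x f_n‖_{H^s} ≤ C·2^{-n(s-1)}` for all sufficiently large `n`. -/
theorem fn_deriv_fn_bound (s : ℝ) (hs : 3 / 2 < s) (φhat : ℝ → ℝ) (φ : ℝ → ℂ)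
    (hφ : CutoffPair φhat φ) :
    ∃ C : ℝ, 0 < C ∧ ∃ N : ℕ, ∀ n : ℕ, N ≤ n →
      sobolevNorm s (fun x => fn s φ n x * deriv (fn s φ n) x)
        ≤ C * (2 : ℝ) ^ (-(n : ℝ) * (s - 1)) := by
  obtain ⟨g, rfl⟩ := hφ.exists_schwartzMap_eq
  obtain ⟨C, hC, hbound⟩ := fn_deriv_fn_bound_general s (by linarith) g
  exact ⟨C, hC, 0, fun n _ => hbound n⟩
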